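/- Finite-horizon consistency of stochastic dynamic programming: In the standing setting, let Assumption 1 hold and suppose 𝐏_ν converges weakly to 𝐏, φ_ν epi-converges to φ and φ_ν converges pointwise to φ on 𝒳 × 𝒳 × Ξ. Fix T ∈ ℕ and let V^{T+1} = 0, V^t = B(V^{t+1}) and V_ν^{T+1} = 0, V_ν^t = B_ν(V_ν^{t+1}) for t ∈ {1,…,T}, all real valued. Suppose for each t ∈ {1,…,T}: the sequence (V_ν^{t+1})_ν is equi-lsc on 𝒳, and for each x̄ ∈ 𝒳: (i) liminf_{α→−∞} liminf_{(ν,x)→(∞,x̄)} ∫_Ξ b_ν(V_ν^{t+1})(x,ξ) 1{b_ν(V_ν^{t+1})(x,ξ) ≤ α} d𝐏_ν(ξ) = 0 and the functions b_ν(V_ν^{t+1}) are lsc on 𝒳 × Ξ and form an equi-lsc sequence; (ii) limsup_{α→∞} limsup_{ν→∞} ∫_Ξ b_ν(V_ν^{t+1})(x̄,ξ) 1{b_ν(V_ν^{t+1})(x̄,ξ) ≥ α} d𝐏_ν(ξ) = 0 and the functions b_ν(V_ν^{t+1})(x̄,·) are usc on Ξ and form an equi-usc sequence. Then for each t ∈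 {1,…,T}, V_ν^{t+1} epi-converges to V^{t+1}, and for every (x,ξ) ∈ 𝒳 × Ξ the outer limit of the sets argmin_{y∈𝒴(x,ξ)} { φ_ν(x,y,ξ) + β V_ν^{t+1}(y) } is contained in argmin_{y∈𝒴(x,ξ)} { φ(x,y,ξ) + β V^{t+1}(y) }, and this latter set is nonempty. -/

import Mathlib

/-!
The value functions converge pointwise, by backward induction on the stage. Equi-lower
semicontinuity upgrades pointwise convergence of the approximating value functions to joint lower
limits as `(ν, y) → (∞, z)`; with pointwise upper limits, these let minima over the compact sets
`𝒴(x,ξ)` pass to the limit, so `b_ν(V_ν)(x,·)` converges pointwise to `b(V)(x,·)`.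

To pass to the limit in the integral, a layer-cake formula and the portmanteau theorem give a Fatou
lemma for nonnegative integrands and weakly converging measures. It applies to `max(g, α) - α` for
`g = b_ν(V_ν)(x,·)`, and also for `g = -b_ν(V_ν)(x,·)`, since equi-semicontinuity provides joint
lower limits in `ξ` in both cases. Asymptotic integrability removes the truncation as `α → -∞`.
-/

open Filter MeasureTheory Topology Set

noncomputable section

/-- Extended-real to extended-nonnegative-real (positive part). -/
def erealToENN (x : EReal) : ENNReal := if x = ⊤ then ⊤ else ENNReal.ofReal x.toReal

/-- Integral of an extended-real-valued function. -/
def eintegral {Ω : Type*} [MeasurableSpace Ω] (P : Measure Ω) (g : Ω → EReal) : EReal :=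
  ((∫⁻ ω, erealToENN (g ω) ∂P : ENNReal) : EReal) -
    ((∫⁻ ω, erealToENN (-(g ω)) ∂P : ENNReal) : EReal)

/-- Integrability of an extended-real-valued function. -/
def EIntegrable {Ω : Type*} [MeasurableSpace Ω] (P : Measure Ω) (g : Ω → EReal) : Prop :=
  AEMeasurable g P ∧ (∫⁻ ω, erealToENN (g ω) ∂P) < ⊤ ∧ (∫⁻ ω, erealToENN (-(g ω)) ∂P) < ⊤

/-- g·1{g ≤ α}. -/
def truncBelow {Ω : Type*} (g : Ω → EReal) (α : ℝ) (ω : Ω) : EReal :=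
  if g ω ≤ (α : EReal) then g ω else 0

/-- g·1{g ≥ α}. -/
def truncAbove {Ω : Type*} (g : Ω → EReal) (α : ℝ) (ω : Ω) : EReal :=
  if (α : EReal) ≤ g ω then g ω else 0

/-- Epi-convergence of a sequence of extended-real-valued functions on a set `Z`. -/
def EpiConvergesOn {E : Type*} [TopologicalSpace E] (Z : Set E)
    (F : ℕ → E → EReal) (f : E → EReal) : Prop :=
  ∀ z ∈ Z,
    (∀ zs : ℕ → E, (∀ ν, zs ν ∈ Z) → Tendsto zs atTop (𝓝 z) →
      f z ≤ liminf (fun ν => F ν (zs ν)) atTop) ∧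
    (∃ zs : ℕ → E, (∀ ν, zs ν ∈ Z) ∧ Tendsto zs atTop (𝓝 z) ∧
      limsup (fun ν => F ν (zs ν)) atTop ≤ f z)

/-- A sequence of functions is equi-lower semicontinuous on `Z`. -/
def EquiLscOn {E : Type*} [PseudoMetricSpace E] (Z : Set E) (F : ℕ → E → EReal) : Prop :=
  ∀ z ∈ Z,
    limsup (fun ν => F ν z) atTop = ⊥ ∨
    ∀ ρ ε : ℝ, 0 < ρ → 0 < ε → ∃ ν' : ℕ, ∃ δ : ℝ, 0 < δ ∧ ∀ ν, ν' ≤ ν →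
      min (F ν z - (ε : EReal)) (ρ : EReal) ≤
        ⨅ (w : E) (_ : w ∈ Z) (_ : dist w z ≤ δ), F ν w

/-- Equi-upper semicontinuity on `Z`. -/
def EquiUscOn {E : Type*} [PseudoMetricSpace E] (Z : Set E) (F : ℕ → E → EReal) : Prop :=
  EquiLscOn Z (fun ν z => -(F ν z))

/-- Iterated lower limit as `(ν, x) → (∞, x̄)` with `x` ranging over `X`. -/
def liminfNuX {E : Type*} [PseudoMetricSpace E] (X : Set E) (xb : E)
    (h : ℕ → E → EReal) : EReal :=
  ⨆ (δ : ℝ) (_ : 0 < δ) (ν' : ℕ),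
    ⨅ (ν : ℕ) (_ : ν' ≤ ν) (x : E) (_ : x ∈ X) (_ : dist x xb ≤ δ), h ν x

/-- Upper limit as `ν → ∞`. -/
def limsupNu (h : ℕ → EReal) : EReal := ⨅ (ν' : ℕ), ⨆ (ν : ℕ) (_ : ν' ≤ ν), h ν

/-- Lower limit as `α → −∞`. -/
def liminfAlphaBot (G : ℝ → EReal) : EReal := ⨆ (αb : ℝ), ⨅ (α : ℝ) (_ : α ≤ αb), G α

/-- Upper limit as `α → ∞`. -/
def limsupAlphaTop (G : ℝ → EReal) : EReal := ⨅ (αb : ℝ), ⨆ (α : ℝ) (_ : αb ≤ α), G α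

/-- Weak convergence of measures: integrals of bounded continuous functions converge. -/
def WeakConv {Ω : Type*} [TopologicalSpace Ω] [MeasurableSpace Ω]
    (Pν : ℕ → Measure Ω) (P : Measure Ω) : Prop :=
  ∀ h : Ω → ℝ, Continuous h → (∃ C : ℝ, ∀ ω, |h ω| ≤ C) →
    Tendsto (fun ν => ∫ ω, h ω ∂(Pν ν)) atTop (𝓝 (∫ ω, h ω ∂P))

/-- The outer limit of a sequence of sets in a topological space. -/
def OuterLimit {X : Type*} [TopologicalSpace X] (S : ℕ → Set X) : Set X :=
  {x | ∃ φ : ℕ → ℕ, StrictMono φ ∧ ∃ s : ℕ → X, (∀ κ, s κ ∈ S (φ κ)) ∧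
    Tendsto s atTop (𝓝 x)}

/-- The set of minimizers of `g` over `S`. -/
def ArgminOn {E : Type*} (S : Set E) (g : E → EReal) : Set E :=
  {y ∈ S | ∀ z ∈ S, g y ≤ g z}

/-- `b(f)(x,ξ) = inf_{y ∈ 𝒴(x,ξ)} { φ(x,y,ξ) + β f(y) }`. -/
def bop {E Ξ' : Type*} (Y : E → Ξ' → Set E) (β : ℝ) (φ : E → E → Ξ' → ℝ)
    (f : E → EReal) (x : E) (ξ : Ξ') : EReal :=
  ⨅ (y : E) (_ : y ∈ Y x ξ), (((φ x y ξ : ℝ) : EReal) + (β : EReal) * f y)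

/-- `F` has joint lower limits at least `f` on `Z`: `liminf F_ν(w) ≥ f(z)` as `(ν, w) → (∞, z)`
with `w ∈ Z`. This is the lower half of epi-convergence, phrased with filters. -/
def LowerLimitOn {E R : Type*} [TopologicalSpace E] [CompleteLattice R] (Z : Set E)
    (F : ℕ → E → R) (f : E → R) : Prop :=
  ∀ z ∈ Z, f z ≤ liminf (fun q : ℕ × E => F q.1 q.2) (atTop ×ˢ 𝓝[Z] z)

section LowerLimits

variable {E E' R S : Type*} [TopologicalSpace E] [TopologicalSpace E'] {Z : Set E}

lemma lowerLimitOn_iff [CompleteLinearOrder R] {F : ℕ → E → R} {f : E → R} :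
    LowerLimitOn Z F f ↔
      ∀ z ∈ Z, ∀ a < f z, ∀ᶠ q in (atTop : Filter ℕ) ×ˢ 𝓝[Z] z, a < F q.1 q.2 :=
  forall₂_congr fun _ _ => le_liminf_iff

lemma LowerLimitOn.le_liminf_comp [CompleteLattice R] {F : ℕ → E → R} {f : E → R}
    (h : LowerLimitOn Z F f) {z : E} (hz : z ∈ Z) {s : ℕ → ℕ} {w : ℕ → E}
    (hs : Tendsto s atTop atTop) (hwZ : ∀ k, w k ∈ Z) (hw : Tendsto w atTop (𝓝 z)) :
    f z ≤ liminf (fun k => F (s k) (w k)) atTop :=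
  have hsw : Tendsto (fun k => (s k, w k)) atTop ((atTop : Filter ℕ) ×ˢ 𝓝[Z] z) :=
    hs.prodMk (tendsto_nhdsWithin_iff.2 ⟨hw, .of_forall hwZ⟩)
  (h z hz).trans hsw.liminf_le_liminf_comp

lemma LowerLimitOn.comp_continuousOn [CompleteLattice R] {Z' : Set E'} {F : ℕ → E → R} {f : E → R}
    (h : LowerLimitOn Z F f) {m : E' → E} (hm : ContinuousOn m Z') (hmZ : MapsTo m Z' Z) :
    LowerLimitOn Z' (fun ν w => F ν (m w)) (fun w => f (m w)) := by
  intro z hz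
  have hmz : Tendsto (Prod.map id m) (atTop ×ˢ 𝓝[Z'] z) ((atTop : Filter ℕ) ×ˢ 𝓝[Z] m z) :=
    tendsto_id.prodMap ((hm z hz).tendsto_nhdsWithin hmZ)
  exact (h (m z) (hmZ hz)).trans hmz.liminf_le_liminf_comp

lemma LowerLimitOn.monotone_comp [CompleteLinearOrder R] [TopologicalSpace R] [OrderTopology R]
    [CompleteLinearOrder S] [TopologicalSpace S] [OrderTopology S] {F : ℕ → E → R} {f : E → R}
    (h : LowerLimitOn Z F f) {m : R → S} (hm : Monotone m) (hmc : Continuous m) :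
    LowerLimitOn Z (fun ν w => m (F ν w)) (fun w => m (f w)) := by
  intro z hz
  have : NeBot (𝓝[Z] z) := mem_closure_iff_nhdsWithin_neBot.1 (subset_closure hz)
  exact (hm (h z hz)).trans_eq
    (hm.map_liminf_of_continuousAt (fun q : ℕ × E => F q.1 q.2) hmc.continuousAt)

lemma LowerLimitOn.add {F G : ℕ → E → EReal} {f g : E → EReal}
    (hf : LowerLimitOn Z F f) (hg : LowerLimitOn Z G g) :
    LowerLimitOn Z (fun ν w => F ν w + G ν w) (fun w => f w + g w) :=
  fun z hz => (add_le_add (hf z hz) (hg z hz)).trans EReal.le_liminf_add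

lemma LowerLimitOn.const_mul {F : ℕ → E → EReal} {f : E → EReal} (h : LowerLimitOn Z F f)
    {β : ℝ} (hβ : 0 ≤ β) :
    LowerLimitOn Z (fun ν w => (β : EReal) * F ν w) (fun w => (β : EReal) * f w) :=
  h.monotone_comp (fun _ _ hab => mul_le_mul_of_nonneg_left hab (EReal.coe_nonneg.2 hβ))
    (continuous_iff_continuousAt.2 fun _ => EReal.Tendsto.const_mul tendsto_id
      (.inl (EReal.coe_ne_bot β)) (.inl (EReal.coe_ne_top β)))

lemma LowerLimitOn.lowerSemicontinuousOn [CompleteLinearOrder R] [DenselyOrdered R]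
    [TopologicalSpace R] [OrderTopology R] {F : ℕ → E → R} {f : E → R}
    (h : LowerLimitOn Z F f) (hp : ∀ y ∈ Z, Tendsto (fun ν => F ν y) atTop (𝓝 (f y))) :
    LowerSemicontinuousOn f Z := by
  intro z hz a ha
  obtain ⟨b, hab, hb⟩ := exists_between ha
  have hcurry : ∀ᶠ w in 𝓝[Z] z, ∀ᶠ ν in atTop, b < F ν w :=
    (eventually_swap_iff.1 (lowerLimitOn_iff.1 h z hz b hb)).curry
  filter_upwards [hcurry, eventually_mem_nhdsWithin] with w hw hwZ
  exact hab.trans_le (ge_of_tendsto (hp w hwZ) (hw.mono fun _ => le_of_lt))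

lemma LowerLimitOn.epiConvergesOn {F : ℕ → E → EReal} {f : E → EReal} (h : LowerLimitOn Z F f)
    (hp : ∀ z ∈ Z, Tendsto (fun ν => F ν z) atTop (𝓝 (f z))) : EpiConvergesOn Z F f :=
  fun z hz => ⟨fun _ hwZ hw => h.le_liminf_comp hz tendsto_id hwZ hw,
    fun _ => z, fun _ => hz, tendsto_const_nhds, (hp z hz).limsup_eq.le⟩

lemma exists_tendsto_forall_strictMono_eq {z : E} (hz : z ∈ Z) {N : ℕ → ℕ} (hN : StrictMono N)
    {w : ℕ → E} (hwZ : ∀ k, w k ∈ Z) (hw : Tendsto w atTop (𝓝 z)) :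
    ∃ u : ℕ → E, (∀ ν, u ν ∈ Z) ∧ Tendsto u atTop (𝓝 z) ∧ ∀ k, u (N k) = w k := by
  have hext (k : ℕ) : Function.extend N w (fun _ => z) (N k) = w k := hN.injective.extend_apply ..
  have hgap (ν : ℕ) (hν : ¬∃ k, N k = ν) : Function.extend N w (fun _ => z) ν = z :=
    Function.extend_apply' _ _ _ hν
  refine ⟨Function.extend N w fun _ => z, fun ν => ?_, fun U hU => ?_, hext⟩
  · by_cases hν : ∃ k, N k = ν
    · obtain ⟨k, rfl⟩ := hν
      exact hext k ▸ hwZ k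
    · rwa [hgap ν hν]
  · obtain ⟨k₀, hk₀⟩ := eventually_atTop.1 (hw.eventually hU)
    refine mem_map.2 (mem_atTop_sets.2 ⟨N k₀, fun ν hν => ?_⟩)
    rw [mem_preimage]
    by_cases hν' : ∃ k, N k = ν
    · obtain ⟨k, rfl⟩ := hν'
      exact hext k ▸ hk₀ k (hN.le_iff_le.1 hν)
    · exact (hgap ν hν').symm ▸ mem_of_mem_nhds hU

-- Epi-convergence only controls full sequences, so a violating sequence of pairs `(ν_k, w_k)` is
-- completed to a full sequence by filling the gaps with the limit point.
lemma EpiConvergesOn.lowerLimitOn [FirstCountableTopology E] {F : ℕ → E → EReal} {f : E → EReal}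
    (h : EpiConvergesOn Z F f) : LowerLimitOn Z F f := by
  rw [lowerLimitOn_iff]
  intro z hz a ha
  by_contra hviol
  have hmem : ∀ᶠ q in (atTop : Filter ℕ) ×ˢ 𝓝[Z] z, q.2 ∈ Z :=
    tendsto_snd.eventually eventually_mem_nhdsWithin
  obtain ⟨q, hq, hqviol⟩ := exists_seq_forall_of_frequently
    ((not_eventually.1 hviol).and_eventually hmem)
  obtain ⟨s, hs, hN⟩ := strictMono_subseq_of_tendsto_atTop (tendsto_fst.comp hq)
  have hw : Tendsto (fun k => (q (s k)).2) atTop (𝓝 z) :=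
    (tendsto_snd.comp (hq.comp hs.tendsto_atTop)).mono_right nhdsWithin_le_nhds
  obtain ⟨u, huZ, hu, huN⟩ :=
    exists_tendsto_forall_strictMono_eq hz hN (fun k => (hqviol (s k)).2) hw
  have hlt : ∀ᶠ ν in atTop, a < F ν (u ν) :=
    eventually_lt_of_lt_liminf (ha.trans_le ((h z hz).1 u huZ hu))
  obtain ⟨k, hk⟩ := (hN.tendsto_atTop.eventually hlt).exists
  exact (hqviol (s k)).1 (huN k ▸ hk)

end LowerLimits

section EquiLsc

variable {E E' : Type*} [PseudoMetricSpace E] [PseudoMetricSpace E']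

lemma EquiLscOn.lowerLimitOn {Z : Set E} {F : ℕ → E → EReal} {f : E → EReal} (h : EquiLscOn Z F)
    (hp : ∀ z ∈ Z, Tendsto (fun ν => F ν z) atTop (𝓝 (f z))) : LowerLimitOn Z F f := by
  rw [lowerLimitOn_iff]
  intro z hz a ha
  rcases h z hz with hbot | hequi
  · exact absurd (hbot ▸ (hp z hz).limsup_eq ▸ ha) not_lt_bot
  obtain ⟨r, har, hr⟩ := EReal.lt_iff_exists_real_btwn.1 ha
  obtain ⟨s, hrs, hs⟩ := EReal.lt_iff_exists_real_btwn.1 hr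
  obtain ⟨N, δ, hδ, hN⟩ := hequi (|r| + 1) (s - r) (by positivity)
    (sub_pos.2 (EReal.coe_lt_coe_iff.1 hrs))
  have hnear : ∀ᶠ w in 𝓝[Z] z, w ∈ Z ∧ dist w z ≤ δ :=
    eventually_mem_nhdsWithin.and (nhdsWithin_le_nhds (Metric.closedBall_mem_nhds z hδ))
  filter_upwards [(((hp z hz).eventually_const_lt hs).and (eventually_ge_atTop N)).prod_mk hnear]
    with q ⟨⟨hsq, hNq⟩, hqZ, hqδ⟩
  refine har.trans_le (le_trans (le_min ?_ ?_)
    ((hN q.1 hNq).trans (iInf_le_of_le q.2 (iInf₂_le hqZ hqδ))))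
  · calc (r : EReal) = (s : EReal) - ((s - r : ℝ) : EReal) := by
          rw [← EReal.coe_sub, sub_sub_cancel]
      _ ≤ F q.1 z - ((s - r : ℝ) : EReal) := EReal.sub_le_sub hsq.le le_rfl
  · exact EReal.coe_le_coe_iff.2 ((le_abs_self r).trans (le_add_of_nonneg_right zero_le_one))

lemma EquiLscOn.prodMk_left {A : Set E} {B : Set E'} {F : ℕ → E × E' → EReal}
    (h : EquiLscOn (A ×ˢ B) F) {x : E} (hx : x ∈ A) : EquiLscOn B (fun ν w => F ν (x, w)) := by
  intro z hz
  refine (h (x, z) ⟨hx, hz⟩).imp id fun hequi ρ ε hρ hε => ?_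
  obtain ⟨N, δ, hδ, hN⟩ := hequi ρ ε hρ hε
  refine ⟨N, δ, hδ, fun ν hν => (hN ν hν).trans (le_iInf₂ fun w hw => le_iInf fun hwz => ?_)⟩
  have hdist : dist (x, w) (x, z) ≤ δ := by simpa only [dist_prod_same_left] using hwz
  exact iInf_le_of_le (x, w) (iInf₂_le ⟨hx, hw⟩ hdist)

end EquiLsc

section Minimization

variable {E R : Type*} [TopologicalSpace E] {K : Set E}

lemma eventually_forall_mem_of_isCompact {ι : Type*} (hK : IsCompact K) {l : Filter ι}
    {p : ι → E → Prop} (h : ∀ y ∈ K, ∀ᶠ q in l ×ˢ 𝓝[K] y, p q.1 q.2) :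
    ∀ᶠ i in l, ∀ y ∈ K, p i y := by
  refine hK.induction_on (p := fun s => ∀ᶠ i in l, ∀ y ∈ s, p i y)
    (.of_forall fun _ _ => False.elim) (fun s t hst ht => ?_) (fun s t hs ht => ?_) fun y hy => ?_
  · exact ht.mono fun i hi y hy => hi y (hst hy)
  · filter_upwards [hs, ht] with i his hit y hy using hy.elim (his y) (hit y)
  · obtain ⟨pa, hpa, pb, hpb, hp⟩ := eventually_prod_iff.1 (h y hy)
    exact ⟨{w | pb w}, hpb, hpa.mono fun i hi w hw => hp hi hw⟩

lemma LowerLimitOn.tendsto_iInf₂ [CompleteLinearOrder R] [DenselyOrdered R] [TopologicalSpace R]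
    [OrderTopology R] {F : ℕ → E → R} {f : E → R} (hK : IsCompact K) (h : LowerLimitOn K F f)
    (hp : ∀ y ∈ K, Tendsto (fun ν => F ν y) atTop (𝓝 (f y))) :
    Tendsto (fun ν => ⨅ y ∈ K, F ν y) atTop (𝓝 (⨅ y ∈ K, f y)) := by
  refine tendsto_of_le_liminf_of_limsup_le ((le_liminf_iff').2 fun a ha => ?_)
    (le_iInf₂ fun y hy => ?_)
  · have hlt : ∀ᶠ ν in atTop, ∀ y ∈ K, a < F ν y := eventually_forall_mem_of_isCompact hK
      fun y hy => lowerLimitOn_iff.1 h y hy a (ha.trans_le (iInf₂_le y hy))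
    exact hlt.mono fun ν hν => le_iInf₂ fun y hy => (hν y hy).le
  · calc limsup (fun ν => ⨅ y ∈ K, F ν y) atTop ≤ limsup (fun ν => F ν y) atTop :=
          limsup_le_limsup (.of_forall fun ν => iInf₂_le y hy)
      _ = f y := (hp y hy).limsup_eq

lemma LowerLimitOn.outerLimit_argminOn_subset [T2Space E] {F : ℕ → E → EReal} {f : E → EReal}
    (hK : IsCompact K) (h : LowerLimitOn K F f)
    (hp : ∀ y ∈ K, Tendsto (fun ν => F ν y) atTop (𝓝 (f y))) :
    OuterLimit (fun ν => ArgminOn K (F ν)) ⊆ ArgminOn K f := by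
  rintro y ⟨s, hs, w, hw, hwy⟩
  have hyK : y ∈ K := hK.isClosed.mem_of_tendsto hwy (.of_forall fun k => (hw k).1)
  refine ⟨hyK, fun z hz => ?_⟩
  calc f y ≤ liminf (fun k => F (s k) (w k)) atTop :=
        h.le_liminf_comp hyK hs.tendsto_atTop (fun k => (hw k).1) hwy
    _ ≤ liminf (fun k => F (s k) z) atTop :=
        liminf_le_liminf (.of_forall fun k => (hw k).2 z hz)
    _ = f z := ((hp z hz).comp hs.tendsto_atTop).liminf_eq

lemma LowerLimitOn.argminOn_nonempty {F : ℕ → E → EReal} {f : E → EReal} (hK : IsCompact K)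
    (hne : K.Nonempty) (h : LowerLimitOn K F f)
    (hp : ∀ y ∈ K, Tendsto (fun ν => F ν y) atTop (𝓝 (f y))) : (ArgminOn K f).Nonempty :=
  (h.lowerSemicontinuousOn hp).exists_isMinOn hne hK

end Minimization

section WeakFatou

variable {Ω : Type*} [MeasurableSpace Ω]

lemma volume_Ioi_inter_ofReal_lt (x : ENNReal) :
    volume (Ioi 0 ∩ {t : ℝ | ENNReal.ofReal t < x}) = x := by
  induction x with
  | top => simp only [ENNReal.ofReal_lt_top, ofPred_true, inter_univ, Real.volume_Ioi]
  | coe r =>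
    have hIoo : Ioi 0 ∩ {t : ℝ | ENNReal.ofReal t < r} = Ioo 0 (r : ℝ) := by
      ext t
      refine and_congr_right fun ht => ?_
      exact (ENNReal.ofReal_lt_iff_lt_toReal (le_of_lt ht) ENNReal.coe_ne_top)
    rw [hIoo, Real.volume_Ioo, sub_zero, ENNReal.ofReal_coe_nnreal]

lemma lintegral_eq_lintegral_measure_ofReal_lt (μ : Measure Ω) [SFinite μ] {f : Ω → ENNReal}
    (hf : AEMeasurable f μ) :
    ∫⁻ ω, f ω ∂μ = ∫⁻ t in Ioi (0 : ℝ), μ {ω | ENNReal.ofReal t < f ω} := by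
  have hS : MeasurableSet {p : Ω × ℝ | ENNReal.ofReal p.2 < hf.mk f p.1} :=
    measurableSet_lt (ENNReal.measurable_ofReal.comp measurable_snd)
      (hf.measurable_mk.comp measurable_fst)
  calc ∫⁻ ω, f ω ∂μ = ∫⁻ ω, hf.mk f ω ∂μ := lintegral_congr_ae hf.ae_eq_mk
    _ = (μ.prod (volume.restrict (Ioi 0))) {p | ENNReal.ofReal p.2 < hf.mk f p.1} := by
        rw [Measure.prod_apply hS]
        refine lintegral_congr fun ω => ?_
        rw [Measure.restrict_apply (measurable_prodMk_left hS), inter_comm]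
        exact (volume_Ioi_inter_ofReal_lt _).symm
    _ = ∫⁻ t in Ioi (0 : ℝ), μ {ω | ENNReal.ofReal t < hf.mk f ω} := Measure.prod_apply_symm hS
    _ = ∫⁻ t in Ioi (0 : ℝ), μ {ω | ENNReal.ofReal t < f ω} :=
        lintegral_congr fun t => measure_congr (hf.ae_eq_mk.mono fun ω hω =>
          propext (by change _ < _ ↔ _ < _; rw [hω]))

variable [PseudoMetricSpace Ω] [OpensMeasurableSpace Ω] {P : Measure Ω} {Pν : ℕ → Measure Ω}
  [IsProbabilityMeasure P] [∀ ν, IsProbabilityMeasure (Pν ν)]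

lemma WeakConv.measure_le_liminf_of_isOpen (h : WeakConv Pν P) {U : Set Ω} (hU : IsOpen U) :
    P U ≤ liminf (fun ν => Pν ν U) atTop := by
  let μ : ProbabilityMeasure Ω := ⟨P, inferInstance⟩
  let μν (ν : ℕ) : ProbabilityMeasure Ω := ⟨Pν ν, inferInstance⟩
  have hμ : Tendsto μν atTop (𝓝 μ) := ProbabilityMeasure.tendsto_iff_forall_integral_tendsto.2
    fun f => h f f.continuous ⟨‖f‖, f.norm_coe_le_norm⟩
  exact ProbabilityMeasure.le_liminf_measure_open_of_tendsto hμ hU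

lemma WeakConv.measure_lt_le_liminf {R : Type*} [CompleteLinearOrder R] (h : WeakConv Pν P)
    {u : ℕ → Ω → R} {v : Ω → R} (huv : LowerLimitOn univ u v) (a : R) :
    P {ω | a < v ω} ≤ liminf (fun ν => Pν ν {ω | a < u ν ω}) atTop := by
  let U (N : ℕ) : Set Ω := interior {ω | ∀ ν ≥ N, a < u ν ω}
  have hUmono : Monotone U := fun M N hMN =>
    interior_mono fun ω hω ν hν => hω ν (hMN.trans hν)
  have hcover : {ω | a < v ω} ⊆ ⋃ N, U N := by
    intro ω hω
    have hlt := lowerLimitOn_iff.1 huv ω (mem_univ ω) a hω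
    rw [nhdsWithin_univ] at hlt
    obtain ⟨pa, hpa, pb, hpb, hp⟩ := eventually_prod_iff.1 hlt
    obtain ⟨N, hN⟩ := eventually_atTop.1 hpa
    exact mem_iUnion.2 ⟨N, mem_interior_iff_mem_nhds.2
      (hpb.mono fun w hw ν hν => hp (hN ν hν) hw)⟩
  calc P {ω | a < v ω} ≤ P (⋃ N, U N) := measure_mono hcover
    _ = ⨆ N, P (U N) := hUmono.measure_iUnion
    _ ≤ liminf (fun ν => Pν ν {ω | a < u ν ω}) atTop := iSup_le fun N =>
        (h.measure_le_liminf_of_isOpen isOpen_interior).trans <| liminf_le_liminf <|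
          (eventually_ge_atTop N).mono fun ν hν => measure_mono fun _ hω => interior_subset hω ν hν

lemma WeakConv.lintegral_le_liminf (h : WeakConv Pν P) {u : ℕ → Ω → ENNReal} {v : Ω → ENNReal}
    (huv : LowerLimitOn univ u v) (hu : ∀ ν, AEMeasurable (u ν) (Pν ν)) (hv : AEMeasurable v P) :
    ∫⁻ ω, v ω ∂P ≤ liminf (fun ν => ∫⁻ ω, u ν ω ∂(Pν ν)) atTop := by
  have hmeas (ν : ℕ) : Measurable fun t : ℝ => Pν ν {ω | ENNReal.ofReal t < u ν ω} :=
    Antitone.measurable fun s t hst =>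
      measure_mono fun _ hω => (ENNReal.ofReal_le_ofReal hst).trans_lt hω
  simp only [fun ν => lintegral_eq_lintegral_measure_ofReal_lt (Pν ν) (hu ν)]
  calc ∫⁻ ω, v ω ∂P = ∫⁻ t in Ioi (0 : ℝ), P {ω | ENNReal.ofReal t < v ω} :=
        lintegral_eq_lintegral_measure_ofReal_lt P hv
    _ ≤ ∫⁻ t in Ioi (0 : ℝ), liminf (fun ν => Pν ν {ω | ENNReal.ofReal t < u ν ω}) atTop :=
        lintegral_mono fun t => h.measure_lt_le_liminf huv (ENNReal.ofReal t)
    _ ≤ _ := lintegral_liminf_le hmeas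

end WeakFatou

section EIntegral

variable {Ω : Type*}

lemma truncBelow_eq_indicator (g : Ω → EReal) (α : ℝ) :
    truncBelow g α = {ω | g ω ≤ α}.indicator g := by
  classical
  funext ω
  rw [indicator_apply]
  rfl

lemma truncAbove_eq_indicator (g : Ω → EReal) (α : ℝ) :
    truncAbove g α = {ω | α ≤ g ω}.indicator g := by
  classical
  funext ω
  rw [indicator_apply]
  rfl

lemma truncBelow_neg (g : Ω → EReal) (α : ℝ) :
    truncBelow (fun ω => -g ω) α = fun ω => -truncAbove g (-α) ω := by
  funext ω
  simp only [truncBelow, truncAbove, EReal.neg_le (a := g ω), ← EReal.coe_neg]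
  split_ifs
  exacts [rfl, neg_zero.symm]

variable [MeasurableSpace Ω] {P : Measure Ω} {g : Ω → EReal}

lemma erealToENN_coe (r : ℝ) : erealToENN r = ENNReal.ofReal r :=
  EReal.toENNReal_of_ne_top (EReal.coe_ne_top r)

lemma monotone_erealToENN : Monotone erealToENN :=
  fun _ _ => EReal.toENNReal_le_toENNReal

lemma continuous_erealToENN : Continuous erealToENN :=
  EReal.continuous_toENNReal

lemma EIntegrable.neg (hg : EIntegrable P g) : EIntegrable P (fun ω => -g ω) :=
  ⟨hg.1.neg, hg.2.2, by simpa only [neg_neg] using hg.2.1⟩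

lemma EIntegrable.eintegral_neg (hg : EIntegrable P g) :
    eintegral P (fun ω => -g ω) = -eintegral P g := by
  simp only [eintegral, neg_neg]
  rw [EReal.neg_sub (.inl (EReal.coe_ennreal_ne_bot _))
    (.inl (EReal.coe_ennreal_eq_top_iff.not.2 hg.2.1.ne)), sub_eq_add_neg, add_comm]

lemma EIntegrable.indicator (hg : EIntegrable P g) {s : Set Ω} (hs : NullMeasurableSet s P) :
    EIntegrable P (s.indicator g) := by
  refine ⟨hg.1.indicator₀ hs, (lintegral_mono fun ω => ?_).trans_lt hg.2.1,
    (lintegral_mono fun ω => ?_).trans_lt hg.2.2⟩ <;>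
  by_cases hω : ω ∈ s <;> simp [hω, erealToENN]

lemma eIntegrable_truncBelow (hg : EIntegrable P g) (α : ℝ) : EIntegrable P (truncBelow g α) :=
  truncBelow_eq_indicator g α ▸ hg.indicator (nullMeasurableSet_le hg.1 aemeasurable_const)

lemma eIntegrable_truncAbove (hg : EIntegrable P g) (α : ℝ) : EIntegrable P (truncAbove g α) :=
  truncAbove_eq_indicator g α ▸ hg.indicator (nullMeasurableSet_le aemeasurable_const hg.1)

/-- The expectation `E[max(g, α)]`, computed as `E[(g - α)⁺] + α`, which never meets `⊤ - ⊤`. -/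
def lowerTruncExpectation (P : Measure Ω) (g : Ω → EReal) (α : ℝ) : EReal :=
  ((∫⁻ ω, erealToENN (g ω - α) ∂P : ENNReal) : EReal) + α

lemma monotone_erealToENN_sub (α : ℝ) : Monotone fun x : EReal => erealToENN (x - α) :=
  fun _ _ hxy => monotone_erealToENN (EReal.sub_le_sub hxy le_rfl)

lemma continuous_erealToENN_sub (α : ℝ) : Continuous fun x : EReal => erealToENN (x - α) := by
  have hsub : Continuous fun x : EReal => x + ((-α : ℝ) : EReal) :=
    continuous_iff_continuousAt.2 fun x =>
      (EReal.continuousAt_add (p := (x, _)) (.inr (EReal.coe_ne_bot _))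
        (.inr (EReal.coe_ne_top _))).comp (f := fun y => (y, ((-α : ℝ) : EReal))) (by fun_prop)
  exact continuous_erealToENN.comp hsub

lemma erealToENN_sub_add_neg_le {α : ℝ} (hα : α ≤ 0) (x : EReal) :
    erealToENN (x - α) + erealToENN (-x) ≤
      erealToENN x + erealToENN (-(if x ≤ α then x else 0)) + ENNReal.ofReal (-α) := by
  induction x with
  | bot => simp [erealToENN]
  | top => simp [erealToENN]
  | coe r =>
    split_ifs with hr <;> rw [EReal.coe_le_coe_iff] at hr <;>
    simp only [← EReal.coe_sub, ← EReal.coe_neg, ← EReal.coe_zero, erealToENN_coe, ENNReal.ofReal,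
      ← ENNReal.coe_add, ENNReal.coe_le_coe, ← NNReal.coe_le_coe, NNReal.coe_add,
      Real.coe_toNNReal'] <;>
    grind

lemma erealToENN_add_le_sub_add_neg {α : ℝ} (hα : α ≤ 0) (x : EReal) :
    erealToENN x + ENNReal.ofReal (-α) ≤ erealToENN (x - α) + erealToENN (-x) := by
  induction x with
  | bot => simp [erealToENN]
  | top => simp [erealToENN]
  | coe r =>
    simp only [← EReal.coe_sub, ← EReal.coe_neg, erealToENN_coe, ENNReal.ofReal,
      ← ENNReal.coe_add, ENNReal.coe_le_coe, ← NNReal.coe_le_coe, NNReal.coe_add,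
      Real.coe_toNNReal']
    grind

lemma eintegral_truncBelow {α : ℝ} (hα : α ≤ 0) :
    eintegral P (truncBelow g α) = -(∫⁻ ω, erealToENN (-truncBelow g α ω) ∂P : ENNReal) := by
  have hpos (ω : Ω) : erealToENN (truncBelow g α ω) = 0 := by
    refine EReal.toENNReal_of_nonpos ?_
    rw [truncBelow]
    split_ifs with hω
    · exact hω.trans (EReal.coe_nonpos.2 hα)
    · exact le_rfl
  simp only [eintegral, hpos, lintegral_zero, EReal.coe_ennreal_zero, zero_sub]

variable [IsProbabilityMeasure P]

lemma EIntegrable.lintegral_sub_add_neg_le (hg : EIntegrable P g) {α : ℝ} (hα : α ≤ 0) :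
    ∫⁻ ω, erealToENN (g ω - α) ∂P + ∫⁻ ω, erealToENN (-g ω) ∂P ≤
      ∫⁻ ω, erealToENN (g ω) ∂P + ∫⁻ ω, erealToENN (-truncBelow g α ω) ∂P +
        ENNReal.ofReal (-α) := by
  calc ∫⁻ ω, erealToENN (g ω - α) ∂P + ∫⁻ ω, erealToENN (-g ω) ∂P
      = ∫⁻ ω, (erealToENN (g ω - α) + erealToENN (-g ω)) ∂P :=
        (lintegral_add_right' _ (continuous_erealToENN.measurable.comp_aemeasurable hg.1.neg)).symm
    _ ≤ ∫⁻ ω, (erealToENN (g ω) + erealToENN (-truncBelow g α ω) + ENNReal.ofReal (-α)) ∂P :=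
        lintegral_mono fun ω => erealToENN_sub_add_neg_le hα (g ω)
    _ = ∫⁻ ω, erealToENN (g ω) ∂P + ∫⁻ ω, erealToENN (-truncBelow g α ω) ∂P +
        ENNReal.ofReal (-α) := by
      rw [lintegral_add_right' _ aemeasurable_const, lintegral_const, measure_univ, mul_one]
      congr 1
      exact lintegral_add_left' (continuous_erealToENN.measurable.comp_aemeasurable hg.1) _

lemma EIntegrable.lintegral_add_le_sub_add_neg (hg : EIntegrable P g) {α : ℝ} (hα : α ≤ 0) :
    ∫⁻ ω, erealToENN (g ω) ∂P + ENNReal.ofReal (-α) ≤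
      ∫⁻ ω, erealToENN (g ω - α) ∂P + ∫⁻ ω, erealToENN (-g ω) ∂P := by
  calc ∫⁻ ω, erealToENN (g ω) ∂P + ENNReal.ofReal (-α)
      = ∫⁻ ω, (erealToENN (g ω) + ENNReal.ofReal (-α)) ∂P := by
        rw [lintegral_add_right' _ aemeasurable_const, lintegral_const, measure_univ, mul_one]
    _ ≤ ∫⁻ ω, (erealToENN (g ω - α) + erealToENN (-g ω)) ∂P :=
        lintegral_mono fun ω => erealToENN_add_le_sub_add_neg hα (g ω)
    _ = ∫⁻ ω, erealToENN (g ω - α) ∂P + ∫⁻ ω, erealToENN (-g ω) ∂P :=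
        lintegral_add_right' _ (continuous_erealToENN.measurable.comp_aemeasurable hg.1.neg)

lemma EIntegrable.lowerTruncExpectation_add_eintegral_truncBelow_le (hg : EIntegrable P g) {α : ℝ}
    (hα : α ≤ 0) :
    lowerTruncExpectation P g α + eintegral P (truncBelow g α) ≤ eintegral P g := by
  have hle := hg.lintegral_sub_add_neg_le hα
  have htail := (eIntegrable_truncBelow hg α).2.2
  have hsum : ∫⁻ ω, erealToENN (g ω - α) ∂P < ⊤ := (le_self_add.trans hle).trans_lt <|
    ENNReal.add_lt_top.2 ⟨ENNReal.add_lt_top.2 ⟨hg.2.1, htail⟩, ENNReal.ofReal_lt_top⟩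
  rw [eintegral_truncBelow hα, lowerTruncExpectation, eintegral, ← sub_eq_add_neg]
  lift ∫⁻ ω, erealToENN (g ω - α) ∂P to NNReal using hsum.ne with a
  lift ∫⁻ ω, erealToENN (g ω) ∂P to NNReal using hg.2.1.ne with p
  lift ∫⁻ ω, erealToENN (-g ω) ∂P to NNReal using hg.2.2.ne with n
  lift ∫⁻ ω, erealToENN (-truncBelow g α ω) ∂P to NNReal using htail.ne with t
  have hle' : (a + n : ℝ) ≤ p + t + -α := by
    rw [← Real.coe_toNNReal (-α) (neg_nonneg.2 hα)]
    rw [ENNReal.ofReal] at hle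
    exact_mod_cast hle
  have hsub : (a + α - t : ℝ) ≤ p - n := by linarith
  simp only [EReal.coe_nnreal_eq_coe_real]
  exact_mod_cast hsub

lemma EIntegrable.eintegral_le_lowerTruncExpectation (hg : EIntegrable P g) {α : ℝ} (hα : α ≤ 0) :
    eintegral P g ≤ lowerTruncExpectation P g α := by
  have hle := hg.lintegral_add_le_sub_add_neg hα
  rw [lowerTruncExpectation, eintegral]
  rcases eq_or_ne (∫⁻ ω, erealToENN (g ω - α) ∂P) ⊤ with htop | hfin
  · rw [htop, EReal.coe_ennreal_top, EReal.top_add_coe]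
    exact le_top
  lift ∫⁻ ω, erealToENN (g ω - α) ∂P to NNReal using hfin with a
  lift ∫⁻ ω, erealToENN (g ω) ∂P to NNReal using hg.2.1.ne with p
  lift ∫⁻ ω, erealToENN (-g ω) ∂P to NNReal using hg.2.2.ne with n
  have hle' : (p + -α : ℝ) ≤ a + n := by
    rw [← Real.coe_toNNReal (-α) (neg_nonneg.2 hα)]
    rw [ENNReal.ofReal] at hle
    exact_mod_cast hle
  have hsub : (p - n : ℝ) ≤ a + α := by linarith
  simp only [EReal.coe_nnreal_eq_coe_real]
  exact_mod_cast hsub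

end EIntegral

section IteratedLimits

lemma liminfAlphaBot_eq_liminf (G : ℝ → EReal) : liminfAlphaBot G = liminf G atBot := by
  simp only [liminfAlphaBot, atBot_basis.liminf_eq_iSup_iInf, mem_Iic, iSup_true]

lemma limsupAlphaTop_eq_limsup (G : ℝ → EReal) : limsupAlphaTop G = limsup G atTop := by
  simp only [limsupAlphaTop, atTop_basis.limsup_eq_iInf_iSup, mem_Ici, iInf_true]

lemma limsupNu_eq_limsup (h : ℕ → EReal) : limsupNu h = limsup h atTop :=
  limsup_eq_iInf_iSup_of_nat.symm

lemma liminfNuX_le_liminf {E : Type*} [PseudoMetricSpace E] {X : Set E} {x : E} (hx : x ∈ X)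
    (h : ℕ → E → EReal) : liminfNuX X x h ≤ liminf (fun ν => h ν x) atTop :=
  iSup₂_le fun δ hδ => iSup_le fun N => le_liminf_of_le (by isBoundedDefault) <|
    (eventually_ge_atTop N).mono fun ν hν => (iInf₂_le ν hν).trans <|
      (iInf₂_le x hx).trans (iInf_le _ ((dist_self x).trans_le hδ.le))

end IteratedLimits

section AsymptoticIntegrability

variable {Ω : Type*} [MeasurableSpace Ω] {P : Measure Ω} {Pν : ℕ → Measure Ω}
  {g : ℕ → Ω → EReal} {v : Ω → EReal}

/-- Asymptotic inf-integrability: the lower tails `E[g_ν 1{g_ν ≤ α}]` vanish as `ν → ∞` and then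
`α → -∞`. Lower tails are nonpositive for `α ≤ 0`, so only a lower bound is required. -/
def AsympInfIntegrable (Pν : ℕ → Measure Ω) (g : ℕ → Ω → EReal) : Prop :=
  0 ≤ liminf (fun α : ℝ => liminf (fun ν => eintegral (Pν ν) (truncBelow (g ν) α)) atTop) atBot

/-- Asymptotic sup-integrability: the upper tails `E[g_ν 1{g_ν ≥ α}]` vanish as `ν → ∞` and then
`α → ∞`. Upper tails are nonnegative for `α ≥ 0`, so only an upper bound is required. -/
def AsympSupIntegrable (Pν : ℕ → Measure Ω) (g : ℕ → Ω → EReal) : Prop :=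
  limsup (fun α : ℝ => limsup (fun ν => eintegral (Pν ν) (truncAbove (g ν) α)) atTop) atTop ≤ 0

lemma asympInfIntegrable_of_liminfNuX {E : Type*} [PseudoMetricSpace E] {X : Set E} {x : E}
    {g : ℕ → E → Ω → EReal} (hx : x ∈ X)
    (h : 0 ≤ liminfAlphaBot fun α =>
      liminfNuX X x fun ν x => eintegral (Pν ν) (truncBelow (g ν x) α)) :
    AsympInfIntegrable Pν fun ν => g ν x :=
  (h.trans_eq (liminfAlphaBot_eq_liminf _)).trans <|
    liminf_le_liminf <| .of_forall fun _ => liminfNuX_le_liminf hx _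

lemma asympSupIntegrable_iff :
    AsympSupIntegrable Pν g ↔
      limsupAlphaTop (fun α => limsupNu fun ν => eintegral (Pν ν) (truncAbove (g ν) α)) ≤ 0 := by
  simp only [limsupAlphaTop_eq_limsup, limsupNu_eq_limsup, AsympSupIntegrable]

lemma AsympSupIntegrable.neg (h : AsympSupIntegrable Pν g) (hg : ∀ ν, EIntegrable (Pν ν) (g ν)) :
    AsympInfIntegrable Pν (fun ν ω => -g ν ω) := by
  have htail (α : ℝ) : liminf (fun ν => eintegral (Pν ν) (truncBelow (fun ω => -g ν ω) α)) atTop =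
      -limsup (fun ν => eintegral (Pν ν) (truncAbove (g ν) (-α))) atTop := by
    rw [← EReal.liminf_neg]
    refine liminf_congr (.of_forall fun ν => ?_)
    rw [truncBelow_neg, (eIntegrable_truncAbove (hg ν) (-α)).eintegral_neg, Pi.neg_apply]
  let L (α : ℝ) : EReal := limsup (fun ν => eintegral (Pν ν) (truncAbove (g ν) α)) atTop
  calc (0 : EReal) ≤ -limsup L atTop := EReal.neg_nonneg.2 h
    _ = -limsup (L ∘ Neg.neg) atBot := by rw [limsup_comp, map_neg_atBot]
    _ = liminf (-(L ∘ Neg.neg)) atBot := EReal.liminf_neg.symm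
    _ = _ := by simp only [htail]; rfl

variable [PseudoMetricSpace Ω] [OpensMeasurableSpace Ω]
  [IsProbabilityMeasure P] [∀ ν, IsProbabilityMeasure (Pν ν)]

lemma WeakConv.lowerTruncExpectation_le_liminf (h : WeakConv Pν P)
    (hg : ∀ ν, AEMeasurable (g ν) (Pν ν)) (hv : AEMeasurable v P)
    (hgv : LowerLimitOn univ g v) (α : ℝ) :
    lowerTruncExpectation P v α ≤ liminf (fun ν => lowerTruncExpectation (Pν ν) (g ν) α) atTop := by
  have hsub := (continuous_erealToENN_sub α).measurable
  have hfatou : ∫⁻ ω, erealToENN (v ω - α) ∂P ≤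
      liminf (fun ν => ∫⁻ ω, erealToENN (g ν ω - α) ∂(Pν ν)) atTop :=
    h.lintegral_le_liminf
      (hgv.monotone_comp (monotone_erealToENN_sub α) (continuous_erealToENN_sub α))
      (fun ν => hsub.comp_aemeasurable (hg ν)) (hsub.comp_aemeasurable hv)
  have hcoe : ((∫⁻ ω, erealToENN (v ω - α) ∂P : ENNReal) : EReal) ≤
      liminf (fun ν => ((∫⁻ ω, erealToENN (g ν ω - α) ∂(Pν ν) : ENNReal) : EReal)) atTop :=
    (EReal.coe_ennreal_strictMono.monotone hfatou).trans_eq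
      (EReal.coe_ennreal_strictMono.monotone.map_liminf_of_continuousAt _
        continuous_coe_ennreal_ereal.continuousAt)
  calc lowerTruncExpectation P v α
      ≤ liminf (fun ν => ((∫⁻ ω, erealToENN (g ν ω - α) ∂(Pν ν) : ENNReal) : EReal)) atTop +
        liminf (fun _ : ℕ => (α : EReal)) atTop :=
        add_le_add hcoe (liminf_const _).ge
    _ ≤ liminf (fun ν => lowerTruncExpectation (Pν ν) (g ν) α) atTop := EReal.le_liminf_add

lemma WeakConv.eintegral_le_liminf (h : WeakConv Pν P) (hg : ∀ ν, EIntegrable (Pν ν) (g ν))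
    (hv : EIntegrable P v) (hgv : LowerLimitOn univ g v) (htail : AsympInfIntegrable Pν g) :
    eintegral P v ≤ liminf (fun ν => eintegral (Pν ν) (g ν)) atTop := by
  let L (α : ℝ) : EReal := liminf (fun ν => eintegral (Pν ν) (truncBelow (g ν) α)) atTop
  have hsplit {α : ℝ} (hα : α ≤ 0) :
      eintegral P v + L α ≤ liminf (fun ν => eintegral (Pν ν) (g ν)) atTop :=
    calc eintegral P v + L α
        ≤ liminf (fun ν => lowerTruncExpectation (Pν ν) (g ν) α) atTop + L α :=
          add_le_add_left ((hv.eintegral_le_lowerTruncExpectation hα).trans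
            (h.lowerTruncExpectation_le_liminf (fun ν => (hg ν).1) hv.1 hgv α)) _
      _ ≤ liminf (fun ν => lowerTruncExpectation (Pν ν) (g ν) α +
            eintegral (Pν ν) (truncBelow (g ν) α)) atTop := EReal.le_liminf_add
      _ ≤ liminf (fun ν => eintegral (Pν ν) (g ν)) atTop := liminf_le_liminf <| .of_forall
          fun ν => (hg ν).lowerTruncExpectation_add_eintegral_truncBelow_le hα
  calc eintegral P v ≤ liminf (fun _ : ℝ => eintegral P v) atBot + liminf L atBot :=
        (add_zero _).symm.trans_le (add_le_add (liminf_const _).ge htail)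
    _ ≤ liminf (fun α => eintegral P v + L α) atBot := EReal.le_liminf_add
    _ ≤ liminf (fun ν => eintegral (Pν ν) (g ν)) atTop :=
        liminf_le_of_frequently_le' ((eventually_le_atBot 0).mono fun _ hα => hsplit hα).frequently

lemma WeakConv.tendsto_eintegral (h : WeakConv Pν P) (hg : ∀ ν, EIntegrable (Pν ν) (g ν))
    (hv : EIntegrable P v) (hlower : LowerLimitOn univ g v)
    (hupper : LowerLimitOn univ (fun ν ω => -g ν ω) (fun ω => -v ω))
    (hinf : AsympInfIntegrable Pν g) (hsup : AsympSupIntegrable Pν g) :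
    Tendsto (fun ν => eintegral (Pν ν) (g ν)) atTop (𝓝 (eintegral P v)) := by
  refine tendsto_of_le_liminf_of_limsup_le (h.eintegral_le_liminf hg hv hlower hinf) ?_
  rw [← EReal.neg_le_neg_iff, ← EReal.liminf_neg, ← hv.eintegral_neg]
  refine (h.eintegral_le_liminf (fun ν => (hg ν).neg) hv.neg hupper (hsup.neg hg)).trans_eq ?_
  exact liminf_congr (.of_forall fun ν => (hg ν).eintegral_neg)

end AsymptoticIntegrability

section Stage

variable {E Ω : Type*} {β : ℝ} {φ : E → E → Ω → ℝ} {φν : ℕ → E → E → Ω → ℝ}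
  {f : E → EReal} {fν : ℕ → E → EReal} {X : Set E} {Y : E → Ω → Set E} {x : E} {ξ : Ω}

/-- The objective `y ↦ φ(x,y,ξ) + β f(y)` minimized over `𝒴(x,ξ)` in `bop`. -/
def stageObjective (β : ℝ) (φ : E → E → Ω → ℝ) (f : E → EReal) (x : E) (ξ : Ω) (y : E) : EReal :=
  (φ x y ξ : EReal) + (β : EReal) * f y

lemma bop_eqOn {f g : E → EReal} (hYX : ∀ x ∈ X, ∀ ξ, Y x ξ ⊆ X) (hfg : EqOn f g X) :
    EqOn (bop Y β φ f) (bop Y β φ g) X :=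
  fun x hx => funext fun ξ => iInf_congr fun _ => iInf_congr fun hy => by
    rw [hfg (hYX x hx ξ hy)]

lemma tendsto_stageObjective {y : E} (hφ : Tendsto (fun ν => φν ν x y ξ) atTop (𝓝 (φ x y ξ)))
    (hf : Tendsto (fun ν => fν ν y) atTop (𝓝 (f y))) :
    Tendsto (fun ν => stageObjective β (φν ν) (fν ν) x ξ y) atTop
      (𝓝 (stageObjective β φ f x ξ y)) := by
  have hmul : Tendsto (fun ν => (β : EReal) * fν ν y) atTop (𝓝 ((β : EReal) * f y)) :=
    EReal.Tendsto.const_mul hf (.inl (EReal.coe_ne_bot β)) (.inl (EReal.coe_ne_top β))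
  have hadd := EReal.continuousAt_add (p := ((φ x y ξ : EReal), (β : EReal) * f y))
    (.inl (EReal.coe_ne_top _)) (.inl (EReal.coe_ne_bot _))
  exact hadd.tendsto.comp (((continuous_coe_real_ereal.tendsto _).comp hφ).prodMk_nhds hmul)

variable [TopologicalSpace E] [TopologicalSpace Ω]

lemma lowerLimitOn_stageObjective (hβ : 0 ≤ β)
    (hφ : LowerLimitOn (X ×ˢ X ×ˢ (univ : Set Ω)) (fun ν p => (φν ν p.1 p.2.1 p.2.2 : EReal))
      (fun p => (φ p.1 p.2.1 p.2.2 : EReal)))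
    (hf : LowerLimitOn X fν f) {K : Set E} (hKX : K ⊆ X) (hx : x ∈ X) (ξ : Ω) :
    LowerLimitOn K (fun ν => stageObjective β (φν ν) (fν ν) x ξ) (stageObjective β φ f x ξ) :=
  (hφ.comp_continuousOn (m := fun y => (x, y, ξ)) (by fun_prop)
    fun _ hy => ⟨hx, hKX hy, mem_univ ξ⟩).add
      ((hf.comp_continuousOn continuousOn_id hKX).const_mul hβ)

lemma tendsto_bop (hβ : 0 ≤ β) (hK : IsCompact (Y x ξ)) (hYX : Y x ξ ⊆ X)
    (hφ : LowerLimitOn (X ×ˢ X ×ˢ (univ : Set Ω)) (fun ν p => (φν ν p.1 p.2.1 p.2.2 : EReal))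
      (fun p => (φ p.1 p.2.1 p.2.2 : EReal)))
    (hφp : ∀ y ∈ X, Tendsto (fun ν => φν ν x y ξ) atTop (𝓝 (φ x y ξ)))
    (hf : LowerLimitOn X fν f) (hfp : ∀ y ∈ X, Tendsto (fun ν => fν ν y) atTop (𝓝 (f y)))
    (hx : x ∈ X) :
    Tendsto (fun ν => bop Y β (φν ν) (fν ν) x ξ) atTop (𝓝 (bop Y β φ f x ξ)) :=
  (lowerLimitOn_stageObjective hβ hφ hf hYX hx ξ).tendsto_iInf₂ hK fun y hy =>
    tendsto_stageObjective (hφp y (hYX hy)) (hfp y (hYX hy))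

end Stage

section Recursion

variable {E : Type*} {X : Set E} {𝒱 : Set (E → EReal)} {T : ℕ} {V : ℕ → E → EReal}

lemma exists_mem_eqOn_of_recursion {B : (E → EReal) → E → EReal}
    (hBX : ∀ f g, EqOn f g X → EqOn (B f) (B g) X) (hB : ∀ f ∈ 𝒱, B f ∈ 𝒱)
    (hVT : V (T + 1) ∈ 𝒱) (hVrec : ∀ t, 1 ≤ t → t ≤ T → EqOn (V t) (B (V (t + 1))) X)
    {t : ℕ} (htT : t ≤ T + 1) (ht : 1 ≤ t) : ∃ f ∈ 𝒱, EqOn (V t) f X := by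
  induction htT using Nat.decreasingInduction with
  | self => exact ⟨_, hVT, eqOn_refl _ _⟩
  | of_succ s hs ih =>
    obtain ⟨f, hf, hVf⟩ := ih (Nat.le_add_left 1 s)
    exact ⟨B f, hB f hf, (hVrec s ht (Nat.lt_succ_iff.1 hs)).trans (hBX _ _ hVf)⟩

lemma eIntegrable_bop_of_recursion {Ω : Type*} [MeasurableSpace Ω] {P : Measure Ω} {β : ℝ}
    {φ : E → E → Ω → ℝ} {Y : E → Ω → Set E} (hYX : ∀ x ∈ X, ∀ ξ, Y x ξ ⊆ X)
    (hB : ∀ f ∈ 𝒱, (∀ x ∈ X, EIntegrable P (bop Y β φ f x)) ∧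
      (fun x => eintegral P (bop Y β φ f x)) ∈ 𝒱)
    (hVT : V (T + 1) ∈ 𝒱)
    (hVrec : ∀ t, 1 ≤ t → t ≤ T → ∀ x ∈ X, V t x = eintegral P (bop Y β φ (V (t + 1)) x))
    {t : ℕ} (htT : t ≤ T) {x : E} (hx : x ∈ X) :
    EIntegrable P (bop Y β φ (V (t + 1)) x) := by
  obtain ⟨f, hf, hVf⟩ := exists_mem_eqOn_of_recursion
    (B := fun f x => eintegral P (bop Y β φ f x))
    (fun f g hfg x hx => congrArg (eintegral P) (bop_eqOn hYX hfg hx)) (fun f hf => (hB f hf).2)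
    hVT hVrec (Nat.add_le_add_right htT 1) (Nat.le_add_left 1 t)
  exact bop_eqOn hYX hVf hx ▸ (hB f hf).1 x hx

end Recursion

section Consistency

variable {E Ω : Type*} [PseudoMetricSpace Ω] [MeasurableSpace Ω] [OpensMeasurableSpace Ω]
  {X : Set E} {Y : E → Ω → Set E} {β : ℝ} {φ : E → E → Ω → ℝ} {φν : ℕ → E → E → Ω → ℝ}
  {P : Measure Ω} {Pν : ℕ → Measure Ω} [IsProbabilityMeasure P] [∀ ν, IsProbabilityMeasure (Pν ν)]

lemma WeakConv.tendsto_eintegral_of_equiSemicontinuous (h : WeakConv Pν P) {g : ℕ → Ω → EReal}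
    {v : Ω → EReal} (hg : ∀ ν, EIntegrable (Pν ν) (g ν)) (hv : EIntegrable P v)
    (hgv : ∀ ω, Tendsto (fun ν => g ν ω) atTop (𝓝 (v ω)))
    (hinf : AsympInfIntegrable Pν g) (hlsc : EquiLscOn univ g)
    (hsup : AsympSupIntegrable Pν g) (husc : EquiUscOn univ g) :
    Tendsto (fun ν => eintegral (Pν ν) (g ν)) atTop (𝓝 (eintegral P v)) :=
  h.tendsto_eintegral hg hv (hlsc.lowerLimitOn fun ω _ => hgv ω)
    (EquiLscOn.lowerLimitOn husc fun ω _ => (continuous_neg.tendsto _).comp (hgv ω)) hinf hsup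

lemma tendsto_eintegral_bop [PseudoMetricSpace E] {f : E → EReal} {fν : ℕ → E → EReal} {x : E}
    (hY : ∀ ξ, IsCompact (Y x ξ) ∧ Y x ξ ⊆ X) (hβ : 0 ≤ β) (hweak : WeakConv Pν P)
    (hφ : LowerLimitOn (X ×ˢ X ×ˢ (univ : Set Ω)) (fun ν p => (φν ν p.1 p.2.1 p.2.2 : EReal))
      (fun p => (φ p.1 p.2.1 p.2.2 : EReal)))
    (hφp : ∀ y ∈ X, ∀ ξ, Tendsto (fun ν => φν ν x y ξ) atTop (𝓝 (φ x y ξ)))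
    (hfν : EquiLscOn X fν) (hfp : ∀ y ∈ X, Tendsto (fun ν => fν ν y) atTop (𝓝 (f y)))
    (hb : EIntegrable P (bop Y β φ f x)) (hbν : ∀ ν, EIntegrable (Pν ν) (bop Y β (φν ν) (fν ν) x))
    (hinf : AsympInfIntegrable Pν fun ν => bop Y β (φν ν) (fν ν) x)
    (hlsc : EquiLscOn univ fun ν => bop Y β (φν ν) (fν ν) x)
    (hsup : AsympSupIntegrable Pν fun ν => bop Y β (φν ν) (fν ν) x)
    (husc : EquiUscOn univ fun ν => bop Y β (φν ν) (fν ν) x) (hx : x ∈ X) :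
    Tendsto (fun ν => eintegral (Pν ν) (bop Y β (φν ν) (fν ν) x)) atTop
      (𝓝 (eintegral P (bop Y β φ f x))) :=
  hweak.tendsto_eintegral_of_equiSemicontinuous hbν hb
    (fun ξ => tendsto_bop hβ (hY ξ).1 (hY ξ).2 hφ (fun y hy => hφp y hy ξ)
      (hfν.lowerLimitOn hfp) hfp hx) hinf hlsc hsup husc

theorem finite_horizon_consistency_general [MetricSpace E]
    (hY : ∀ x ∈ X, ∀ ξ, (Y x ξ).Nonempty ∧ IsCompact (Y x ξ) ∧ Y x ξ ⊆ X) (hβ : 0 ≤ β)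
    (hweak : WeakConv Pν P)
    (hφe : EpiConvergesOn (X ×ˢ X ×ˢ (univ : Set Ω))
      (fun ν p => (φν ν p.1 p.2.1 p.2.2 : EReal)) (fun p => (φ p.1 p.2.1 p.2.2 : EReal)))
    (hφp : ∀ x ∈ X, ∀ y ∈ X, ∀ ξ, Tendsto (fun ν => φν ν x y ξ) atTop (𝓝 (φ x y ξ)))
    {T : ℕ} {V : ℕ → E → EReal} {Vν : ℕ → ℕ → E → EReal}
    (hterm : ∀ x ∈ X, Tendsto (fun ν => Vν ν (T + 1) x) atTop (𝓝 (V (T + 1) x)))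
    (hVrec : ∀ t, 1 ≤ t → t ≤ T → ∀ x ∈ X, V t x = eintegral P (bop Y β φ (V (t + 1)) x))
    (hVνrec : ∀ ν, ∀ t, 1 ≤ t → t ≤ T → ∀ x ∈ X,
      Vν ν t x = eintegral (Pν ν) (bop Y β (φν ν) (Vν ν (t + 1)) x))
    (hb : ∀ t, 1 ≤ t → t ≤ T → ∀ x ∈ X, EIntegrable P (bop Y β φ (V (t + 1)) x))
    (hbν : ∀ ν, ∀ t, 1 ≤ t → t ≤ T → ∀ x ∈ X,
      EIntegrable (Pν ν) (bop Y β (φν ν) (Vν ν (t + 1)) x))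
    (hequiV : ∀ t, 1 ≤ t → t ≤ T → EquiLscOn X (fun ν => Vν ν (t + 1)))
    (hi : ∀ t, 1 ≤ t → t ≤ T → ∀ x ∈ X,
      AsympInfIntegrable Pν (fun ν => bop Y β (φν ν) (Vν ν (t + 1)) x) ∧
      EquiLscOn univ (fun ν => bop Y β (φν ν) (Vν ν (t + 1)) x))
    (hii : ∀ t, 1 ≤ t → t ≤ T → ∀ x ∈ X,
      AsympSupIntegrable Pν (fun ν => bop Y β (φν ν) (Vν ν (t + 1)) x) ∧
      EquiUscOn univ (fun ν => bop Y β (φν ν) (Vν ν (t + 1)) x)) :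
    ∀ t, 1 ≤ t → t ≤ T →
      EpiConvergesOn X (fun ν => Vν ν (t + 1)) (V (t + 1)) ∧
      ∀ x ∈ X, ∀ ξ,
        OuterLimit (fun ν => ArgminOn (Y x ξ)
            (fun y => (φν ν x y ξ : EReal) + (β : EReal) * Vν ν (t + 1) y)) ⊆
          ArgminOn (Y x ξ) (fun y => (φ x y ξ : EReal) + (β : EReal) * V (t + 1) y) ∧
        (ArgminOn (Y x ξ)
          (fun y => (φ x y ξ : EReal) + (β : EReal) * V (t + 1) y)).Nonempty := by
  have hφ := hφe.lowerLimitOn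
  have hpointwise {t : ℕ} (ht : t ≤ T + 1) :
      1 ≤ t → ∀ x ∈ X, Tendsto (fun ν => Vν ν t x) atTop (𝓝 (V t x)) := by
    induction ht using Nat.decreasingInduction with
    | self => exact fun _ => hterm
    | of_succ t htT ih =>
      intro ht x hx
      have htT : t ≤ T := Nat.lt_succ_iff.1 htT
      obtain ⟨hinf, hlsc⟩ := hi t ht htT x hx
      obtain ⟨hsup, husc⟩ := hii t ht htT x hx
      simp only [fun ν => hVνrec ν t ht htT x hx, hVrec t ht htT x hx]
      exact tendsto_eintegral_bop (fun ξ => (hY x hx ξ).2) hβ hweak hφ (hφp x hx)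
        (hequiV t ht htT) (ih (Nat.le_add_left 1 t)) (hb t ht htT x hx)
        (fun ν => hbν ν t ht htT x hx) hinf hlsc hsup husc hx
  intro t ht htT
  have hVp := hpointwise (Nat.add_le_add_right htT 1) (Nat.le_add_left 1 t)
  have hV := (hequiV t ht htT).lowerLimitOn hVp
  refine ⟨hV.epiConvergesOn hVp, fun x hx ξ => ?_⟩
  obtain ⟨hne, hK, hYX⟩ := hY x hx ξ
  have hobj : LowerLimitOn (Y x ξ) (fun ν => stageObjective β (φν ν) (Vν ν (t + 1)) x ξ)
      (stageObjective β φ (V (t + 1)) x ξ) := lowerLimitOn_stageObjective hβ hφ hV hYX hx ξ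
  have hobjp (y : E) (hy : y ∈ Y x ξ) := tendsto_stageObjective (β := β)
    (hφp x hx y (hYX hy) ξ) (hVp y (hYX hy))
  exact ⟨hobj.outerLimit_argminOn_subset hK hobjp, hobj.argminOn_nonempty hK hne hobjp⟩

end Consistency

/-- Finite-horizon consistency of stochastic dynamic programming. -/
theorem finite_horizon_consistency {n m : ℕ}
    (X : Set (EuclideanSpace ℝ (Fin n))) (hX : IsClosed X)
    (Ξ : Set (EuclideanSpace ℝ (Fin m))) (hΞ : IsClosed Ξ)
    (Y : EuclideanSpace ℝ (Fin n) → Ξ → Set (EuclideanSpace ℝ (Fin n)))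
    (hY : ∀ x ∈ X, ∀ ξ : Ξ, (Y x ξ).Nonempty ∧ IsCompact (Y x ξ) ∧ Y x ξ ⊆ X)
    (β : ℝ) (hβ : β ∈ Set.Ioo (0 : ℝ) 1)
    (φ : EuclideanSpace ℝ (Fin n) → EuclideanSpace ℝ (Fin n) → Ξ → ℝ)
    (φν : ℕ → EuclideanSpace ℝ (Fin n) → EuclideanSpace ℝ (Fin n) → Ξ → ℝ)
    (P : Measure Ξ) (Pν : ℕ → Measure Ξ)
    [IsProbabilityMeasure P] [∀ ν, IsProbabilityMeasure (Pν ν)]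
    -- Assumption 1
    (hA1 : ∃ 𝒱 : Set (EuclideanSpace ℝ (Fin n) → EReal),
      (fun _ => (0 : EReal)) ∈ 𝒱 ∧
      (∀ V ∈ 𝒱, LowerSemicontinuousOn V X ∧ ∃ x ∈ X, V x ≠ ⊤) ∧
      (∀ V ∈ 𝒱, (∀ x ∈ X, EIntegrable P (bop Y β φ V x)) ∧
        (fun x => eintegral P (bop Y β φ V x)) ∈ 𝒱) ∧
      (∀ ν, ∀ V ∈ 𝒱, (∀ x ∈ X, EIntegrable (Pν ν) (bop Y β (φν ν) V x)) ∧
        (fun x => eintegral (Pν ν) (bop Y β (φν ν) V x)) ∈ 𝒱))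
    -- convergence of the data
    (hweak : WeakConv Pν P)
    (hφe : EpiConvergesOn (X ×ˢ X ×ˢ (univ : Set Ξ))
      (fun ν p => ((φν ν p.1 p.2.1 p.2.2 : ℝ) : EReal))
      (fun p => ((φ p.1 p.2.1 p.2.2 : ℝ) : EReal)))
    (hφp : ∀ x ∈ X, ∀ y ∈ X, ∀ ξ : Ξ,
      Tendsto (fun ν => φν ν x y ξ) atTop (𝓝 (φ x y ξ)))
    -- the horizon and the solution functions of the true and approximating equations
    (T : ℕ) (hT : 1 ≤ T)
    (V : ℕ → EuclideanSpace ℝ (Fin n) → EReal)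
    (Vν : ℕ → ℕ → EuclideanSpace ℝ (Fin n) → EReal)
    (hVT : ∀ x, V (T + 1) x = 0)
    (hVνT : ∀ ν x, Vν ν (T + 1) x = 0)
    (hVrec : ∀ t, 1 ≤ t → t ≤ T → ∀ x ∈ X,
      V t x = eintegral P (bop Y β φ (V (t + 1)) x))
    (hVνrec : ∀ ν, ∀ t, 1 ≤ t → t ≤ T → ∀ x ∈ X,
      Vν ν t x = eintegral (Pν ν) (bop Y β (φν ν) (Vν ν (t + 1)) x))
    -- all the solution functions are real valued on 𝒳
    (hreal : ∀ t, 1 ≤ t → t ≤ T + 1 → ∀ x ∈ X,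
      (V t x ≠ ⊤ ∧ V t x ≠ ⊥) ∧ ∀ ν, Vν ν t x ≠ ⊤ ∧ Vν ν t x ≠ ⊥)
    -- equi-lower semicontinuity of the approximating solution functions
    (hequiV : ∀ t, 1 ≤ t → t ≤ T → EquiLscOn X (fun ν => Vν ν (t + 1)))
    -- condition (i): asymptotic inf-integrability, lower semicontinuity and equi-lsc
    (hi : ∀ t, 1 ≤ t → t ≤ T →
      (∀ xb ∈ X, liminfAlphaBot (fun α => liminfNuX X xb (fun ν x =>
        eintegral (Pν ν) (truncBelow (bop Y β (φν ν) (Vν ν (t + 1)) x) α))) = 0) ∧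
      (∀ ν, LowerSemicontinuousOn
        (fun p : EuclideanSpace ℝ (Fin n) × Ξ => bop Y β (φν ν) (Vν ν (t + 1)) p.1 p.2)
        (X ×ˢ (univ : Set Ξ))) ∧
      EquiLscOn (X ×ˢ (univ : Set Ξ))
        (fun ν p => bop Y β (φν ν) (Vν ν (t + 1)) p.1 p.2))
    -- condition (ii): asymptotic sup-integrability, upper semicontinuity and equi-usc
    (hii : ∀ t, 1 ≤ t → t ≤ T → ∀ xb ∈ X,
      limsupAlphaTop (fun α => limsupNu (fun ν =>
        eintegral (Pν ν) (truncAbove (bop Y β (φν ν) (Vν ν (t + 1)) xb) α))) = 0 ∧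
      (∀ ν, UpperSemicontinuous (fun ξ : Ξ => bop Y β (φν ν) (Vν ν (t + 1)) xb ξ)) ∧
      EquiUscOn (univ : Set Ξ) (fun ν ξ => bop Y β (φν ν) (Vν ν (t + 1)) xb ξ)) :
    ∀ t, 1 ≤ t → t ≤ T →
      EpiConvergesOn X (fun ν => Vν ν (t + 1)) (V (t + 1)) ∧
      ∀ x ∈ X, ∀ ξ : Ξ,
        OuterLimit (fun ν => ArgminOn (Y x ξ)
            (fun y => ((φν ν x y ξ : ℝ) : EReal) + (β : EReal) * Vν ν (t + 1) y)) ⊆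
          ArgminOn (Y x ξ)
            (fun y => ((φ x y ξ : ℝ) : EReal) + (β : EReal) * V (t + 1) y) ∧
        (ArgminOn (Y x ξ)
          (fun y => ((φ x y ξ : ℝ) : EReal) + (β : EReal) * V (t + 1) y)).Nonempty := by
  obtain ⟨𝒱, hzero, -, hB, hBν⟩ := hA1
  have hVT𝒱 : V (T + 1) ∈ 𝒱 := (funext hVT : V (T + 1) = fun _ => 0) ▸ hzero
  have hVνT𝒱 (ν : ℕ) : Vν ν (T + 1) ∈ 𝒱 := (funext (hVνT ν) : Vν ν (T + 1) = fun _ => 0) ▸ hzero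
  have hYX : ∀ x ∈ X, ∀ ξ, Y x ξ ⊆ X := fun x hx ξ => (hY x hx ξ).2.2
  refine finite_horizon_consistency_general hY hβ.1.le hweak hφe hφp
    (fun x _ => by simpa only [hVT, hVνT] using tendsto_const_nhds) hVrec hVνrec
    (fun t _ htT x hx => eIntegrable_bop_of_recursion hYX hB hVT𝒱 hVrec htT hx)
    (fun ν t _ htT x hx =>
      eIntegrable_bop_of_recursion hYX (hBν ν) (hVνT𝒱 ν) (hVνrec ν) htT hx)
    hequiV (fun t ht htT x hx => ?_) (fun t ht htT x hx => ?_)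
  · obtain ⟨htail, -, hequi⟩ := hi t ht htT
    exact ⟨asympInfIntegrable_of_liminfNuX hx (htail x hx).ge, hequi.prodMk_left hx⟩
  · obtain ⟨htail, -, hequi⟩ := hii t ht htT x hx
    exact ⟨asympSupIntegrable_iff.2 htail.le, hequi⟩

end
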